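/- Let $L$ be a finite set of integers each at least $2$, with largest element $k$. If $\vec{G}$ is a simple directed graph on $n$ vertices in which every directed cycle has length in $L$, then the number of distinct directed cycles in $\vec{G}$ is at most $|L|^2 n^{k-1}$. -/

import Mathlib

/-!
The proof deletes vertices of small out-degree one at a time. In a nonempty set `S` of vertices, take
a longest directed path inside `S`. By maximality every out-neighbour in `S` of its last vertex `v`
lies on the path, and it closes a directed cycle with the final segment of the path; the length of
that cycle lies in `L` and determines the neighbour. Hence `v` has at most `|L|` out-neighbours in
`S` (`exists_few_out`). A cycle of length `l` through a given arc is determined by its other `l - 2`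
vertices, so at most `|L| * |L| * n ^ (k - 2)` cycles inside `S` pass through `v`
(`ncard_cyclesOn_arc_le`). Induction on `|S|` bounds the number of cycles inside `S` by
`|S| * |L| ^ 2 * n ^ (k - 2)`.
-/


/-- The arc set of a directed cycle of length `len = m + 2` in a digraph `G`:
an injective map `f : ZMod (m+2) → V` with `G (f i) (f (i+1))` for all `i`,
whose consecutive-pair arcs form exactly the finset `s`. -/
def IsDirCycleArcs {V : Type*} [DecidableEq V] (G : V → V → Prop)
    (s : Finset (V × V)) (len : ℕ) : Prop :=
  ∃ m : ℕ, len = m + 2 ∧ ∃ f : ZMod (m + 2) → V, Function.Injective f ∧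
    (∀ i, G (f i) (f (i + 1))) ∧
    s = Finset.image (fun i => (f i, f (i + 1))) Finset.univ

/-- `s` is the arc set of a directed cycle of length `m + 2` whose vertices all lie in `S`. -/
def IsCycleOn {V : Type*} [DecidableEq V] (G : V → V → Prop) (S : Finset V)
    (s : Finset (V × V)) (m : ℕ) : Prop :=
  ∃ f : ZMod (m + 2) → V, Function.Injective f ∧
    (∀ i, G (f i) (f (i + 1))) ∧ (∀ i, f i ∈ S) ∧
    s = Finset.image (fun i => (f i, f (i + 1))) Finset.univ

/-- A directed path inside `S` with `m + 1` vertices, indexed backwards: `p 0` is its last vertex,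
and only the values `p 0, …, p m` matter. -/
def IsPathOn {V : Type*} (G : V → V → Prop) (S : Finset V) (m : ℕ) (p : ℕ → V) : Prop :=
  Set.InjOn p (Set.Iic m) ∧ (∀ i < m, G (p (i + 1)) (p i)) ∧ ∀ i ≤ m, p i ∈ S

/-- An arc from the last vertex of a path back to the vertex `j + 1` steps before it closes a
directed cycle of length `j + 2`. -/
lemma IsPathOn.closes {V : Type*} [DecidableEq V] {G : V → V → Prop} {S : Finset V} {m : ℕ}
    {p : ℕ → V} (hp : IsPathOn G S m p) {j : ℕ} (hj : j + 1 ≤ m) (hG : G (p 0) (p (j + 1))) :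
    ∃ s, IsDirCycleArcs G s (j + 2) := by
  obtain ⟨hinj, harc, -⟩ := hp
  refine ⟨_, j, rfl, fun i : Fin (j + 2) => p (j + 1 - i.val), ?_, ?_, rfl⟩
  · intro a b hab
    change Fin (j + 2) at a b
    have h := hinj (show j + 1 - a.val ≤ m by omega) (show j + 1 - b.val ≤ m by omega) hab
    have ha := a.isLt
    have hb := b.isLt
    exact Fin.ext (by omega)
  · intro i
    change Fin (j + 2) at i
    change G (p (j + 1 - i.val)) (p (j + 1 - (i + 1 : Fin (j + 2)).val))
    have hi := i.isLt
    rw [Fin.val_add_one]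
    split_ifs with h
    · subst h
      simpa using hG
    · have hne : i.val ≠ j + 1 := fun h' => h (Fin.ext h')
      have := harc (j - i.val) (by omega)
      rwa [show j - i.val + 1 = j + 1 - i.val by omega,
        show j - i.val = j + 1 - (i.val + 1) by omega] at this

/-- Every nonempty `S` contains a vertex with at most `|L|` out-neighbours in `S`, namely the last
vertex of a longest path inside `S`. -/
lemma exists_few_out {V : Type*} [Fintype V] [DecidableEq V] (G : V → V → Prop)
    (hirr : Irreflexive G) (L : Finset ℕ)
    (hcyc : ∀ s len, IsDirCycleArcs G s len → len ∈ L) (S : Finset V) (hS : S.Nonempty) :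
    ∃ v ∈ S, ∃ N : Finset V, N.card ≤ L.card ∧ ∀ u ∈ S, G v u → u ∈ N := by
  classical
  have hbound : ∀ m, (∃ p, IsPathOn G S m p) → m ≤ Fintype.card V := by
    rintro m ⟨p, hinj, -, -⟩
    have h := Finset.card_le_univ ((Finset.Iic m).image p)
    rw [Finset.card_image_of_injOn (by simpa using hinj)] at h
    simp at h
    omega
  obtain ⟨x, hx⟩ := hS
  have h0 : ∃ p, IsPathOn G S 0 p :=
    ⟨fun _ => x, fun a ha b hb _ => by simp at ha hb; omega, by simp, by simpa using hx⟩
  -- `m + 1` is the largest number of vertices of a path inside `S`.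
  obtain ⟨p, hp⟩ := Nat.findGreatest_spec (P := fun m => ∃ p, IsPathOn G S m p)
    (Nat.zero_le (Fintype.card V)) h0
  set m := Nat.findGreatest (fun m => ∃ p, IsPathOn G S m p) (Fintype.card V) with hm
  have hmax : ∀ q, ¬ IsPathOn G S (m + 1) q := fun q hq => by
    have := Nat.le_findGreatest (P := fun m => ∃ p, IsPathOn G S m p) (hbound _ ⟨q, hq⟩) ⟨q, hq⟩
    omega
  -- An out-neighbour closing a cycle of length `l` is `p (l - 1)`.
  refine ⟨p 0, hp.2.2 0 (Nat.zero_le _), L.image (fun l => p (l - 1)), Finset.card_image_le, ?_⟩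
  intro u hu hG
  have hon : ∃ j ≤ m, p j = u := by
    by_contra! hno
    refine hmax (fun i => Nat.casesOn i u p) ⟨?_, ?_, ?_⟩
    · rintro (_ | a) ha (_ | b) hb hab
      · rfl
      · exact absurd hab.symm (hno b (by simpa using hb))
      · exact absurd hab (hno a (by simpa using ha))
      · exact congrArg Nat.succ (hp.1 (by simpa using ha) (by simpa using hb) hab)
    · rintro (_ | i) hi
      · exact hG
      · exact hp.2.1 i (by omega)
    · rintro (_ | i) hi
      · exact hu
      · exact hp.2.2 i (by omega)
  obtain ⟨_ | j, hj, rfl⟩ := hon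
  · exact absurd hG (hirr _)
  · obtain ⟨s, hs⟩ := hp.closes hj hG
    exact Finset.mem_image.2 ⟨j + 2, hcyc _ _ hs, rfl⟩

/-- A cycle of length `m + 2` through `v` can be rotated to start at `v`; it is then encoded by its
second vertex and its remaining `m` vertices. That the cycle passes through `v` is expressed by
`hv`: it does not lie inside `S.erase v`. -/
lemma IsCycleOn.eq_image_cons {V : Type*} [DecidableEq V] {G : V → V → Prop} {S : Finset V}
    {s : Finset (V × V)} {m : ℕ} {v : V} (hs : IsCycleOn G S s m)
    (hv : ¬ IsCycleOn G (S.erase v) s m) :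
    ∃ u ∈ S, G v u ∧ ∃ g : Fin m → V,
      s = Finset.univ.image (fun i : Fin (m + 2) =>
        ((Fin.cons v (Fin.cons u g : Fin (m + 1) → V) : Fin (m + 2) → V) i,
         (Fin.cons v (Fin.cons u g : Fin (m + 1) → V) : Fin (m + 2) → V) (i + 1))) := by
  obtain ⟨f, hinj, harc, hmem, rfl⟩ := hs
  obtain ⟨i₀, hi₀⟩ : ∃ i, f i = v := by
    by_contra! hno
    exact hv ⟨f, hinj, harc, fun i => Finset.mem_erase.2 ⟨hno i, hmem i⟩, rfl⟩
  -- `ZMod (m + 2)` unfolds to `Fin (m + 2)`; the `id` only makes the addition take place in `ZMod`.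
  refine ⟨f (i₀ + 1), hmem _, hi₀ ▸ harc i₀,
    fun i => f (i₀ + @id (ZMod (m + 2)) (i.succ.succ : Fin (m + 2))), ?_⟩
  have hcons : (Fin.cons v (Fin.cons (f (i₀ + 1)) (fun i : Fin m =>
      f (i₀ + @id (ZMod (m + 2)) (i.succ.succ : Fin (m + 2)))) : Fin (m + 1) → V) : Fin (m + 2) → V)
      = fun i : ZMod (m + 2) => f (i₀ + i) := by
    funext i
    refine Fin.cases ?_ (fun i => Fin.cases ?_ (fun i => ?_) i) i
    · rw [Fin.cons_zero, ← hi₀]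
      exact congrArg f (add_zero i₀).symm
    · rfl
    · rfl
  rw [hcons]
  ext x
  simp only [Finset.mem_image, Finset.mem_univ, true_and]
  constructor
  · rintro ⟨i, rfl⟩
    refine ⟨i - i₀, Prod.ext (congrArg f (add_sub_cancel i₀ i)) (congrArg f ?_)⟩
    change i₀ + (i - i₀ + 1) = i + 1
    ring
  · rintro ⟨i, rfl⟩
    exact ⟨i₀ + @id (ZMod (m + 2)) i, Prod.ext rfl (congrArg f (add_assoc i₀ i 1))⟩

/-- The cycles inside `S` through a vertex `v` whose out-neighbours in `S` lie in `N` number at most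
`|L| * |N| * n ^ (k - 2)`. -/
lemma ncard_cyclesOn_arc_le {V : Type*} [Fintype V] [DecidableEq V] [Nonempty V]
    (G : V → V → Prop) (L : Finset ℕ) (k : ℕ) (hkmax : ∀ l ∈ L, l ≤ k)
    (S : Finset V) (v : V) (N : Finset V) (hN : ∀ u ∈ S, G v u → u ∈ N) :
    {s : Finset (V × V) | ∃ m, m + 2 ∈ L ∧ IsCycleOn G S s m ∧
        ¬ IsCycleOn G (S.erase v) s m}.ncard
      ≤ L.card * N.card * Fintype.card V ^ (k - 2) := by
  classical
  let F (l : ℕ) (u : V) : Finset (Finset (V × V)) :=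
    (Finset.univ : Finset (Fin (l - 2) → V)).image fun g =>
      Finset.univ.image (fun i : Fin (l - 2 + 2) =>
        ((Fin.cons v (Fin.cons u g : Fin (l - 2 + 1) → V) : Fin (l - 2 + 2) → V) i,
         (Fin.cons v (Fin.cons u g : Fin (l - 2 + 1) → V) : Fin (l - 2 + 2) → V) (i + 1)))
  have hF : ∀ l ∈ L, ∀ u, (F l u).card ≤ Fintype.card V ^ (k - 2) := fun l hl u => by
    refine Finset.card_image_le.trans ?_
    rw [Finset.card_univ, Fintype.card_fun, Fintype.card_fin]
    exact Nat.pow_le_pow_right Fintype.card_pos (Nat.sub_le_sub_right (hkmax l hl) 2)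
  have hsub : {s : Finset (V × V) | ∃ m, m + 2 ∈ L ∧ IsCycleOn G S s m ∧
      ¬ IsCycleOn G (S.erase v) s m} ⊆ ((L ×ˢ N).biUnion fun q => F q.1 q.2 : Finset _) := by
    rintro s ⟨m, hm, hs, hs'⟩
    obtain ⟨u, hu, hG, g, rfl⟩ := hs.eq_image_cons hs'
    exact Finset.mem_coe.2 <| Finset.mem_biUnion.2 ⟨(m + 2, u),
      Finset.mem_product.2 ⟨hm, hN u hu hG⟩, Finset.mem_image.2 ⟨g, Finset.mem_univ _, rfl⟩⟩
  refine (Set.ncard_le_ncard hsub (Finset.finite_toSet _)).trans ?_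
  rw [Set.ncard_coe_finset, ← Finset.card_product]
  exact Finset.card_biUnion_le_card_mul _ _ _ fun q hq =>
    hF q.1 (Finset.mem_product.1 hq).1 q.2

lemma ncard_cyclesOn_le {V : Type*} [Fintype V] [DecidableEq V] [Nonempty V] (G : V → V → Prop)
    (hirr : Irreflexive G) (L : Finset ℕ) (k : ℕ) (hkmax : ∀ l ∈ L, l ≤ k)
    (hcyc : ∀ s len, IsDirCycleArcs G s len → len ∈ L) (c : ℕ) :
    ∀ S : Finset V, S.card = c → {s : Finset (V × V) | ∃ m, m + 2 ∈ L ∧ IsCycleOn G S s m}.ncard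
      ≤ c * (L.card * L.card * Fintype.card V ^ (k - 2)) := by
  induction c with
  | zero =>
    intro S hS
    obtain rfl := Finset.card_eq_zero.1 hS
    have : {s : Finset (V × V) | ∃ m, m + 2 ∈ L ∧ IsCycleOn G ∅ s m} = ∅ := by
      ext s
      simp only [Set.mem_ofPred_eq, Set.mem_empty_iff_false, iff_false]
      rintro ⟨m, -, f, -, -, h, -⟩
      exact absurd (h 0) (Finset.notMem_empty _)
    rw [this]
    simp
  | succ c ih =>
    intro S hS
    obtain ⟨v, hv, N, hNL, hN⟩ := exists_few_out G hirr L hcyc S (Finset.card_pos.1 (by omega))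
    have hsub : {s : Finset (V × V) | ∃ m, m + 2 ∈ L ∧ IsCycleOn G S s m} ⊆
        {s | ∃ m, m + 2 ∈ L ∧ IsCycleOn G (S.erase v) s m} ∪
        {s | ∃ m, m + 2 ∈ L ∧ IsCycleOn G S s m ∧ ¬ IsCycleOn G (S.erase v) s m} := by
      rintro s ⟨m, hm, hs⟩
      by_cases h : IsCycleOn G (S.erase v) s m
      · exact Or.inl ⟨m, hm, h⟩
      · exact Or.inr ⟨m, hm, hs, h⟩
    calc _ ≤ _ := Set.ncard_le_ncard hsub (Set.toFinite _)
      _ ≤ _ := Set.ncard_union_le _ _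
      _ ≤ c * (L.card * L.card * Fintype.card V ^ (k - 2)) +
          L.card * L.card * Fintype.card V ^ (k - 2) :=
        Nat.add_le_add (ih _ (by rw [Finset.card_erase_of_mem hv, hS]; rfl))
          ((ncard_cyclesOn_arc_le G L k hkmax S v N hN).trans (by gcongr))
      _ = _ := by ring

/-- If every directed cycle of a simple digraph `G` on `n`
vertices has length in the finite set `L` of integers `≥ 2` with largest
element `k`, then `G` has at most `|L|² ⋅ n^(k-1)` directed cycles. -/
theorem stmt_3 {V : Type*} [Fintype V] [DecidableEq V] (G : V → V → Prop)
    (hirr : Irreflexive G) (L : Finset ℕ) (hL2 : ∀ l ∈ L, 2 ≤ l)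
    (k : ℕ) (hkL : k ∈ L) (hkmax : ∀ l ∈ L, l ≤ k)
    (hcyc : ∀ s len, IsDirCycleArcs G s len → len ∈ L) :
    {s : Finset (V × V) | ∃ len, IsDirCycleArcs G s len}.ncard
      ≤ L.card ^ 2 * Fintype.card V ^ (k - 1) := by
  have hsub : {s : Finset (V × V) | ∃ len, IsDirCycleArcs G s len} ⊆
      {s | ∃ m, m + 2 ∈ L ∧ IsCycleOn G Finset.univ s m} := by
    rintro s ⟨len, hs⟩
    have hlen := hcyc s len hs
    obtain ⟨m, rfl, f, hinj, harc, rfl⟩ := hs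
    exact ⟨m, hlen, f, hinj, harc, fun _ => Finset.mem_univ _, rfl⟩
  rcases isEmpty_or_nonempty V with hV | hV
  · have : {s : Finset (V × V) | ∃ len, IsDirCycleArcs G s len} = ∅ := by
      ext s
      simp only [Set.mem_ofPred_eq, Set.mem_empty_iff_false, iff_false]
      rintro ⟨_, m, -, f, -⟩
      exact hV.false (f 0)
    rw [this]
    simp
  · have hk : k - 1 = k - 2 + 1 := by have := hL2 k hkL; omega
    calc _ ≤ _ := Set.ncard_le_ncard hsub (Set.toFinite _)
      _ ≤ _ := ncard_cyclesOn_le G hirr L k hkmax hcyc _ Finset.univ rfl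
      _ = _ := by rw [hk, Finset.card_univ]; ring
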